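/- arXiv:1303.3732 — 3 statements merged into one kernel-verified Lean document; each statement's English description precedes it below -/
import Mathlib

section
/- Let K be a finite nonempty index type, and let Λ, α, β : K → ℝ, λ ∈ ℝ and q : K → ℝ satisfy: 0 ≤ q k ≤ 1 for all k, Σ_k q k = 1, α k ≥ 0 and β k ≥ 0 for all k, the stationarity conditions λ + α k − β k = Λ k for all k, and the complementary slackness conditions α k · (q k − 1) = 0 and β k · q k = 0 for all k. If there exist k' ≠ k'' with 0 < q k' < 1 and 0 < q k'' < 1, then Λ k' = Λ k'' and Λ k' ≥ Λ k for every k ∈ K. -/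
/-!
The multiplier `lam` of the budget constraint separates the selection metrics: an active mode has
`β = 0`, so its metric is at least `lam`; it also leaves every other mode strictly below the full
budget, which forces `α = 0` there and hence a metric of at most `lam`.
-/

section KKT

variable {R : Type*} [Ring R] [PartialOrder R] [IsOrderedAddMonoid R] [NoZeroDivisors R]

theorem budget_multiplier_le_metric_of_ne_zero {metric lam α β q : R} (hα : 0 ≤ α)
    (hstat : lam + α - β = metric) (hslack : β * q = 0) (hq : q ≠ 0) : lam ≤ metric := by
  have hβ : β = 0 := (mul_eq_zero.mp hslack).resolve_right hq
  rw [← hstat, hβ, sub_zero]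
  exact le_add_of_nonneg_right hα

theorem metric_le_budget_multiplier_of_ne_cap {metric lam α β q cap : R} (hβ : 0 ≤ β)
    (hstat : lam + α - β = metric) (hslack : α * (q - cap) = 0) (hq : q ≠ cap) :
    metric ≤ lam := by
  have hα : α = 0 := (mul_eq_zero.mp hslack).resolve_right (sub_ne_zero.mpr hq)
  rw [← hstat, hα, add_zero]
  exact sub_le_self lam hβ

theorem stmt_7_general [TopologicalSpace R] [OrderClosedTopology R] {K : Type*}
    {Λ α β q : K → R} {lam budget : R}
    (hq : ∀ k, 0 ≤ q k) (hsum : HasSum q budget)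
    (hα : ∀ k, 0 ≤ α k) (hβ : ∀ k, 0 ≤ β k)
    (hstat : ∀ k, lam + α k - β k = Λ k)
    (hcap : ∀ k, α k * (q k - budget) = 0) (hnonneg : ∀ k, β k * q k = 0)
    {k' : K} (hk' : 0 < q k') (k : K) : Λ k ≤ Λ k' := by
  obtain rfl | hne := eq_or_ne k' k
  · exact le_rfl
  have hlt : q k < budget := lt_hasSum hsum k (fun j _ => hq j) k' hne hk'
  calc
    Λ k ≤ lam := metric_le_budget_multiplier_of_ne_cap (hβ k) (hstat k) (hcap k) hlt.ne
    _ ≤ Λ k' := budget_multiplier_le_metric_of_ne_zero (hα k') (hstat k') (hnonneg k') hk'.ne'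

end KKT

theorem stmt_7 {K : Type*} [Fintype K] [Nonempty K]
    (Λ α β q : K → ℝ) (lam : ℝ)
    (hq0 : ∀ k, 0 ≤ q k) (hq1 : ∀ k, q k ≤ 1)
    (hsum : ∑ k, q k = 1)
    (hα : ∀ k, 0 ≤ α k) (hβ : ∀ k, 0 ≤ β k)
    (hstat : ∀ k, lam + α k - β k = Λ k)
    (hcs1 : ∀ k, α k * (q k - 1) = 0) (hcs2 : ∀ k, β k * q k = 0)
    (k' k'' : K) (hne : k' ≠ k'')
    (hk'0 : 0 < q k') (hk'1 : q k' < 1)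
    (hk''0 : 0 < q k'') (hk''1 : q k'' < 1) :
    Λ k' = Λ k'' ∧ ∀ k, Λ k ≤ Λ k' := by
  have le_of_pos {j : K} (hj : 0 < q j) (k : K) : Λ k ≤ Λ j :=
    stmt_7_general hq0 (hsum ▸ hasSum_fintype q) hα hβ hstat hcs1 hcs2 hj k
  exact ⟨(le_of_pos hk''0 k').antisymm (le_of_pos hk'0 k''), le_of_pos hk'0⟩
end

section
/- Let K be a finite nonempty index type, and let Λ, α, β : K → ℝ, λ ∈ ℝ and q : K → ℝ satisfy: 0 ≤ q k ≤ 1 for all k, Σ_k q k = 1, α k ≥ 0 and β k ≥ 0 for all k, the stationarity conditions λ + α k − β k = Λ k for all k, and the complementary slackness conditions α k · (q k − 1) = 0 and β k · q k = 0 for all k. If q k* = 1 for some k* ∈ K, then Λ k* ≥ Λ k for every k ∈ K. -/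
/-!
The multiplier of the constraint `∑ k, q k = 1` is a threshold separating the selection metrics.
A mode with `q k = 1` has `β k = 0`, so its metric is at least the multiplier. Every other mode then
has `q k = 0`, hence `α k = 0`, so its metric is at most the multiplier.
-/

theorem eq_zero_of_hasSum_self_of_ne {ι M : Type*} [AddCommMonoid M] [PartialOrder M]
    [IsOrderedCancelAddMonoid M] [TopologicalSpace M] [OrderClosedTopology M]
    {f : ι → M} {i j : ι} (hf : ∀ k, 0 ≤ f k) (hsum : HasSum f (f i)) (hji : j ≠ i) :
    f j = 0 := by
  classical
  have hpair : f j + f i ≤ f i := by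
    rw [← Finset.sum_pair hji]
    exact sum_le_hasSum {j, i} (fun k _ ↦ hf k) hsum
  exact le_antisymm (nonpos_of_add_le_left hpair) (hf j)

section SelectionMetric

variable {R : Type*} [Ring R] [PartialOrder R] [IsOrderedAddMonoid R] {Λ α β q lam : R}

theorem multiplier_le_metric_of_eq_one (hα : 0 ≤ α) (hstat : lam + α - β = Λ)
    (hβq : β * q = 0) (hq : q = 1) : lam ≤ Λ := by
  have hβ : β = 0 := by rwa [hq, mul_one] at hβq
  calc
    lam ≤ lam + α := le_add_of_nonneg_right hα
    _ = Λ := by rw [← hstat, hβ, sub_zero]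

theorem metric_le_multiplier_of_eq_zero (hβ : 0 ≤ β) (hstat : lam + α - β = Λ)
    (hαq : α * (q - 1) = 0) (hq : q = 0) : Λ ≤ lam := by
  have hα : α = 0 := by rwa [hq, zero_sub, mul_neg_one, neg_eq_zero] at hαq
  calc
    Λ = lam - β := by rw [← hstat, hα, add_zero]
    _ ≤ lam := sub_le_self lam hβ

end SelectionMetric

theorem stmt_8_general {K R : Type*} [Ring R] [PartialOrder R] [IsOrderedAddMonoid R]
    [TopologicalSpace R] [OrderClosedTopology R] (Λ α β q : K → R) (lam : R)
    (hq : ∀ k, 0 ≤ q k) (hsum : HasSum q 1)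
    (hα : ∀ k, 0 ≤ α k) (hβ : ∀ k, 0 ≤ β k)
    (hstat : ∀ k, lam + α k - β k = Λ k)
    (hαq : ∀ k, α k * (q k - 1) = 0) (hβq : ∀ k, β k * q k = 0)
    (kstar : K) (hkstar : q kstar = 1) (k : K) :
    Λ k ≤ Λ kstar := by
  obtain rfl | hk := eq_or_ne k kstar
  · exact le_rfl
  have hqk : q k = 0 := eq_zero_of_hasSum_self_of_ne hq (hkstar.symm ▸ hsum) hk
  calc
    Λ k ≤ lam := metric_le_multiplier_of_eq_zero (hβ k) (hstat k) (hαq k) hqk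
    _ ≤ Λ kstar :=
      multiplier_le_metric_of_eq_one (hα kstar) (hstat kstar) (hβq kstar) hkstar

theorem stmt_8 {K : Type*} [Fintype K] [Nonempty K]
    (Λ α β q : K → ℝ) (lam : ℝ)
    (hq0 : ∀ k, 0 ≤ q k) (hq1 : ∀ k, q k ≤ 1)
    (hsum : ∑ k, q k = 1)
    (hα : ∀ k, 0 ≤ α k) (hβ : ∀ k, 0 ≤ β k)
    (hstat : ∀ k, lam + α k - β k = Λ k)
    (hcs1 : ∀ k, α k * (q k - 1) = 0) (hcs2 : ∀ k, β k * q k = 0)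
    (kstar : K) (hkstar : q kstar = 1) :
    ∀ k, Λ k ≤ Λ kstar :=
  stmt_8_general Λ α β q lam hq0 (hsum ▸ hasSum_fintype q) hα hβ hstat hcs1 hcs2 kstar hkstar
end

section
/- Let (Ω, 𝔉, P) be a probability space and f, g : Ω → ℝ nonnegative integrable measurable functions with g(ω) > 0 for P-almost every ω. For θ ∈ [0,1] define A_θ := { ω : (1−θ)·f(ω) ≥ θ·g(ω) } and h(θ) := ∫_{A_θ} f dP − ∫_{A_θᶜ} g dP. Then h is nonincreasing on [0,1], h(0) = ∫ f dP ≥ 0, and h(1) = −∫ g dP ≤ 0. -/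
open MeasureTheory

/-! For nonnegative `f` and `g`, raising `θ` raises `θ * g` and lowers `(1 - θ) * f`, so the set
`A_θ` shrinks: the integral of `f` loses mass while the subtracted integral of `g` gains it. Up to
null sets, `A_θ` is everything at `θ = 0` and, as `g > 0` almost everywhere, nothing at `θ = 1`. -/

section ThresholdSet

variable {α R : Type*} [Ring R] [PartialOrder R]

/-- The acceptance region `A_θ` of the threshold rule that selects `f` over `g` when
`(1 - θ) * f x ≥ θ * g x`; ties go to `f`. -/
def thresholdSet (f g : α → R) (θ : R) : Set α :=
  {x | θ * g x ≤ (1 - θ) * f x}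

variable {f g : α → R}

theorem mem_thresholdSet {θ : R} {x : α} :
    x ∈ thresholdSet f g θ ↔ θ * g x ≤ (1 - θ) * f x :=
  Iff.rfl

theorem mem_thresholdSet_zero {x : α} : x ∈ thresholdSet f g 0 ↔ 0 ≤ f x := by
  simp [mem_thresholdSet]

theorem mem_thresholdSet_one {x : α} : x ∈ thresholdSet f g 1 ↔ g x ≤ 0 := by
  simp [mem_thresholdSet]

theorem mem_thresholdSet_of_le [IsOrderedRing R] {a b : R} {x : α} (hab : a ≤ b)
    (hf : 0 ≤ f x) (hg : 0 ≤ g x) (hx : x ∈ thresholdSet f g b) : x ∈ thresholdSet f g a :=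
  calc
    a * g x ≤ b * g x := by gcongr
    _ ≤ (1 - b) * f x := hx
    _ ≤ (1 - a) * f x := by gcongr

end ThresholdSet

section ThresholdBalance

variable {α : Type*} [MeasurableSpace α] {μ : Measure α} {f g : α → ℝ}

theorem setIntegral_sub_setIntegral_compl_mono {s t : Set α} (hst : s ≤ᵐ[μ] t)
    (hf : 0 ≤ᵐ[μ.restrict t] f) (hg : 0 ≤ᵐ[μ.restrict sᶜ] g)
    (hfi : IntegrableOn f t μ) (hgi : IntegrableOn g sᶜ μ) :
    (∫ x in s, f x ∂μ) - ∫ x in sᶜ, g x ∂μ ≤ (∫ x in t, f x ∂μ) - ∫ x in tᶜ, g x ∂μ :=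
  sub_le_sub (setIntegral_mono_set hfi hf hst) (setIntegral_mono_set hgi hg hst.compl)

variable (μ f g) in
/-- The function `h` of the threshold `θ`: the reward `f` collected on the acceptance region minus
the reward `g` collected off it. The optimal threshold is where the two balance. -/
noncomputable def thresholdBalance (θ : ℝ) : ℝ :=
  (∫ x in thresholdSet f g θ, f x ∂μ) - ∫ x in (thresholdSet f g θ)ᶜ, g x ∂μ

theorem antitone_thresholdBalance (hf : 0 ≤ᵐ[μ] f) (hg : 0 ≤ᵐ[μ] g)
    (hfi : Integrable f μ) (hgi : Integrable g μ) : Antitone (thresholdBalance μ f g) := by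
  intro a b hab
  have hsub : thresholdSet f g b ≤ᵐ[μ] thresholdSet f g a := by
    filter_upwards [hf, hg] with x hfx hgx using mem_thresholdSet_of_le hab hfx hgx
  exact setIntegral_sub_setIntegral_compl_mono hsub (ae_restrict_of_ae hf) (ae_restrict_of_ae hg)
    hfi.integrableOn hgi.integrableOn

theorem thresholdBalance_zero (hf : 0 ≤ᵐ[μ] f) : thresholdBalance μ f g 0 = ∫ x, f x ∂μ := by
  have huniv : thresholdSet f g 0 =ᵐ[μ] Set.univ :=
    Filter.eventuallyEq_univ.2 (hf.mono fun _ => mem_thresholdSet_zero.2)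
  rw [thresholdBalance, setIntegral_congr_set huniv, setIntegral_congr_set huniv.compl]
  simp

theorem thresholdBalance_one (hg : ∀ᵐ x ∂μ, 0 < g x) :
    thresholdBalance μ f g 1 = -∫ x, g x ∂μ := by
  have hempty : thresholdSet f g 1 =ᵐ[μ] (∅ : Set α) :=
    Filter.eventuallyEq_empty.2 (hg.mono fun _ hx => mt mem_thresholdSet_one.1 hx.not_ge)
  rw [thresholdBalance, setIntegral_congr_set hempty, setIntegral_congr_set hempty.compl]
  simp

theorem stmt_15_general (hf : 0 ≤ᵐ[μ] f) (hg : ∀ᵐ x ∂μ, 0 < g x)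
    (hfi : Integrable f μ) (hgi : Integrable g μ) :
    Antitone (thresholdBalance μ f g) ∧
    thresholdBalance μ f g 0 = (∫ x, f x ∂μ) ∧ 0 ≤ thresholdBalance μ f g 0 ∧
    thresholdBalance μ f g 1 = -(∫ x, g x ∂μ) ∧ thresholdBalance μ f g 1 ≤ 0 := by
  have hg0 : 0 ≤ᵐ[μ] g := hg.mono fun _ => le_of_lt
  have hzero : thresholdBalance μ f g 0 = ∫ x, f x ∂μ := thresholdBalance_zero hf
  have hone : thresholdBalance μ f g 1 = -∫ x, g x ∂μ := thresholdBalance_one hg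
  exact ⟨antitone_thresholdBalance hf hg0 hfi hgi,
    hzero, hzero ▸ integral_nonneg_of_ae hf,
    hone, hone ▸ neg_nonpos.2 (integral_nonneg_of_ae hg0)⟩

end ThresholdBalance

theorem stmt_15 {Ω : Type*} [MeasurableSpace Ω] (P : Measure Ω) [IsProbabilityMeasure P]
    (f g : Ω → ℝ) (hf : Measurable f) (hg : Measurable g)
    (hf0 : ∀ ω, 0 ≤ f ω) (hg0 : ∀ ω, 0 ≤ g ω)
    (hfi : Integrable f P) (hgi : Integrable g P)
    (hgpos : ∀ᵐ ω ∂P, 0 < g ω)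
    (A : ℝ → Set Ω) (hA : ∀ θ, A θ = {ω | θ * g ω ≤ (1 - θ) * f ω})
    (h : ℝ → ℝ)
    (hh : ∀ θ, h θ = (∫ ω in A θ, f ω ∂P) - (∫ ω in (A θ)ᶜ, g ω ∂P)) :
    AntitoneOn h (Set.Icc 0 1) ∧
    h 0 = (∫ ω, f ω ∂P) ∧ 0 ≤ h 0 ∧
    h 1 = -(∫ ω, g ω ∂P) ∧ h 1 ≤ 0 := by
  obtain rfl : A = thresholdSet f g := funext hA
  obtain rfl : h = thresholdBalance P f g := funext hh
  exact (stmt_15_general (.of_forall hf0) hgpos hfi hgi).imp_left fun hanti => hanti.antitoneOn _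
end
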